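/- Let H = {1,…,m} and L = {1,…,n} be finite sets, let p = (p₁,…,p_m) ∈ [0,1]^m, and let F = (f₁,…,f_n) be an aligned tuple of nonnegative real-valued functions on the power set of H. Then for every tuple Π = (π₁,…,π_m) of partitions of L, E(Π, p, F) ≥ ∏_{l=1}^{n} E(f_l, μ_p), where μ_p is the product Bernoulli measure on subsets of H; that is, every staggered polling schedule yields an expectation at least as large as the fully separate schedule, whose value is the product of the individual expectations. -/

import Mathlib

open Finset

/-- Weight of a block `M` of a partition relative to a turnout set `S`. -/
def blockWeight {n : ℕ} (p : ℝ) (M S : Finset (Fin n)) : ℝ :=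
  if M ⊆ S then p else if M ∩ S = ∅ then 1 - p else 0

/-- The measure `μ_{π,p}` on subsets of `L = Fin n`. -/
def partMeasure {n : ℕ} (pt : Finpartition (univ : Finset (Fin n))) (p : ℝ)
    (S : Finset (Fin n)) : ℝ :=
  ∏ M ∈ pt.parts, blockWeight p M S

/-- `L_h(T) = {l : (h,l) ∈ T}`. -/
def Lh {m n : ℕ} (h : Fin m) (T : Finset (Fin m × Fin n)) : Finset (Fin n) :=
  univ.filter fun l => (h, l) ∈ T

/-- `H_l(T) = {h : (h,l) ∈ T}`. -/
def Hl {m n : ℕ} (l : Fin n) (T : Finset (Fin m × Fin n)) : Finset (Fin m) :=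
  univ.filter fun h => (h, l) ∈ T

/-- The measure `μ_{Π,p}` on subsets of `H × L`. -/
def schedMeasure {m n : ℕ} (Sch : Fin m → Finpartition (univ : Finset (Fin n)))
    (p : Fin m → ℝ) (T : Finset (Fin m × Fin n)) : ℝ :=
  ∏ h, partMeasure (Sch h) (p h) (Lh h T)

/-- `E(Π, p, F)`. -/
def schedExp {m n : ℕ} (Sch : Fin m → Finpartition (univ : Finset (Fin n)))
    (p : Fin m → ℝ) (F : Fin n → Finset (Fin m) → ℝ) : ℝ :=
  ∑ T : Finset (Fin m × Fin n), (∏ l, F l (Hl l T)) * schedMeasure Sch p T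

def IncreasingAt {m : ℕ} (f : Finset (Fin m) → ℝ) (h : Fin m) : Prop :=
  ∀ S : Finset (Fin m), f S ≤ f (insert h S)

def DecreasingAt {m : ℕ} (f : Finset (Fin m) → ℝ) (h : Fin m) : Prop :=
  ∀ S : Finset (Fin m), f (insert h S) ≤ f S

def Aligned {m n : ℕ} (F : Fin n → Finset (Fin m) → ℝ) : Prop :=
  ∀ h : Fin m, (∀ l, IncreasingAt (F l) h) ∨ (∀ l, DecreasingAt (F l) h)

/-- `Sch'` is coarser than `Sch`. -/
def Coarser {m n : ℕ} (Sch' Sch : Fin m → Finpartition (univ : Finset (Fin n))) : Prop :=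
  ∀ h, ∀ M ∈ (Sch h).parts, ∃ M' ∈ (Sch' h).parts, M ⊆ M'

/-- Product Bernoulli measure on subsets of `H = Fin m`. -/
def bern {m : ℕ} (p : Fin m → ℝ) (S : Finset (Fin m)) : ℝ :=
  (∏ h ∈ S, p h) * ∏ h ∈ Sᶜ, (1 - p h)

/-- Expectation with respect to the product Bernoulli measure. -/
def bernExp {m : ℕ} (p : Fin m → ℝ) (f : Finset (Fin m) → ℝ) : ℝ :=
  ∑ S : Finset (Fin m), f S * bern p S

/-!
The expectation of a nonnegative function of the turnout tuple can be compared one voter at a time,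
all other voters being held fixed. For a single voter `h`, the product `∏ l, F l (H_l)` becomes
`∏ l, if l ∈ S then a l else b l` for a random set `S` of elections which is a union of independent
blocks, so its expectation is a product over the blocks `M` of `p ∏_M a + (1 - p) ∏_M b`. By
alignment and Chebyshev's inequality, merging blocks increases this product. Hence coarsening the
partitions increases the expectation, and for partitions into singletons the elections are
independent.
-/

section Chebyshev

variable {ι R : Type*} [CommRing R] [PartialOrder R] [IsOrderedRing R]

lemma prod_convexComb_le_of_le (s : Finset ι) {q r : R} (hq : 0 ≤ q) (hr : 0 ≤ r)
    (hqr : q + r = 1) {a b : ι → R} (hb : ∀ i ∈ s, 0 ≤ b i) (hba : ∀ i ∈ s, b i ≤ a i) :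
    ∏ i ∈ s, (q * a i + r * b i) ≤ q * ∏ i ∈ s, a i + r * ∏ i ∈ s, b i := by
  classical
  induction s using Finset.induction_on with
  | empty => simp [hqr]
  | insert i s hi ih =>
    rw [forall_mem_insert] at hb hba
    simp only [prod_insert hi]
    set A := ∏ j ∈ s, a j
    set B := ∏ j ∈ s, b j
    have hBA : B ≤ A := prod_le_prod hb.2 hba.2
    have hcov : 0 ≤ q * r * ((a i - b i) * (A - B)) :=
      mul_nonneg (mul_nonneg hq hr) (mul_nonneg (sub_nonneg.2 hba.1) (sub_nonneg.2 hBA))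
    calc (q * a i + r * b i) * ∏ j ∈ s, (q * a j + r * b j)
        ≤ (q * a i + r * b i) * (q * A + r * B) :=
          mul_le_mul_of_nonneg_left (ih hb.2 hba.2)
            (add_nonneg (mul_nonneg hq (hb.1.trans hba.1)) (mul_nonneg hr hb.1))
      _ = q * (a i * A) + r * (b i * B) - q * r * ((a i - b i) * (A - B)) := by
          linear_combination (q * (a i * A) + r * (b i * B)) * hqr
      _ ≤ q * (a i * A) + r * (b i * B) := sub_le_self _ hcov

lemma prod_convexComb_le (s : Finset ι) {q r : R} (hq : 0 ≤ q) (hr : 0 ≤ r) (hqr : q + r = 1)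
    {a b : ι → R} (ha : ∀ i ∈ s, 0 ≤ a i) (hb : ∀ i ∈ s, 0 ≤ b i)
    (hab : (∀ i ∈ s, b i ≤ a i) ∨ ∀ i ∈ s, a i ≤ b i) :
    ∏ i ∈ s, (q * a i + r * b i) ≤ q * ∏ i ∈ s, a i + r * ∏ i ∈ s, b i := by
  rcases hab with hba | hab
  · exact prod_convexComb_le_of_le s hq hr hqr hb hba
  · simpa only [add_comm] using
      prod_convexComb_le_of_le s hr hq ((add_comm r q).trans hqr) ha hab

end Chebyshev

section Partition

variable {α R : Type*} [DecidableEq α] {s : Finset α}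

lemma prod_parts_prod [CommMonoid R] (P : Finpartition s) (g : α → R) :
    ∏ M ∈ P.parts, ∏ l ∈ M, g l = ∏ l ∈ s, g l := by
  conv_rhs => rw [← P.biUnion_parts]
  exact (prod_biUnion P.disjoint).symm

lemma sum_powerset_prod_inter_parts [CommSemiring R] (P : Finpartition s)
    (φ : Finset α → Finset α → R) :
    ∑ S ∈ s.powerset, ∏ M ∈ P.parts, φ M (M ∩ S) =
      ∏ M ∈ P.parts, ∑ A ∈ M.powerset, φ M A := by
  rw [prod_sum]
  refine sum_bij' (fun S _ M _ => M ∩ S) (fun g _ => P.parts.attach.biUnion fun M => g M M.2)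
    ?_ ?_ ?_ ?_ ?_
  · simp
  · intro g hg
    simp only [mem_pi, mem_powerset] at hg
    simpa using fun M hM => (hg M hM).trans (P.subset hM)
  · intro S hS
    ext l
    have hl : l ∈ S → ∃ M ∈ P.parts, l ∈ M := fun hl => P.exists_mem (mem_powerset.1 hS hl)
    simp only [mem_biUnion, mem_attach, true_and, Subtype.exists, mem_inter]
    grind
  · intro g hg
    have hg (N) (hN : N ∈ P.parts) : g N hN ⊆ N := mem_powerset.1 (mem_pi.1 hg N hN)
    ext M hM l
    simp only [mem_inter, mem_biUnion, mem_attach, true_and, Subtype.exists]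
    refine ⟨fun ⟨hlM, N, hN, hlN⟩ => ?_, fun hl => ⟨hg M hM hl, M, hM, hl⟩⟩
    obtain rfl := P.eq_of_mem_parts hM hN hlM (hg N hN hlN)
    exact hlN
  · exact fun S _ => (prod_attach P.parts fun M => φ M (M ∩ S)).symm

variable {P Q : Finpartition s}

lemma biUnion_filter_parts_subset_eq (hPQ : P ≤ Q) {N : Finset α} (hN : N ∈ Q.parts) :
    ({M ∈ P.parts | M ⊆ N} : Finset _).biUnion id = N := by
  ext l
  simp only [mem_biUnion, mem_filter, id]
  refine ⟨fun ⟨_, ⟨_, hMN⟩, hl⟩ => hMN hl, fun hl => ?_⟩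
  obtain ⟨M, hM, hlM⟩ := P.exists_mem (Q.subset hN hl)
  obtain ⟨N', hN', hMN'⟩ := hPQ hM
  obtain rfl := Q.eq_of_mem_parts hN hN' hl (hMN' hlM)
  exact ⟨M, ⟨hM, hMN'⟩, hlM⟩

lemma prod_filter_parts_subset_prod [CommMonoid R] (hPQ : P ≤ Q) {N : Finset α}
    (hN : N ∈ Q.parts) (g : α → R) :
    ∏ M ∈ P.parts with M ⊆ N, ∏ l ∈ M, g l = ∏ l ∈ N, g l := by
  conv_rhs => rw [← biUnion_filter_parts_subset_eq hPQ hN]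
  exact (prod_biUnion (P.disjoint.subset (coe_subset.2 (filter_subset _ _)))).symm

lemma prod_parts_eq_prod_prod_filter [CommMonoid R] (hPQ : P ≤ Q) (g : Finset α → R) :
    ∏ M ∈ P.parts, g M = ∏ N ∈ Q.parts, ∏ M ∈ P.parts with M ⊆ N, g M := by
  have hparts : P.parts = Q.parts.biUnion fun N => {M ∈ P.parts | M ⊆ N} := by
    ext M
    simp only [mem_biUnion, mem_filter]
    exact ⟨fun hM => (hPQ hM).imp fun N hN => ⟨hN.1, hM, hN.2⟩, fun ⟨_, _, hM, _⟩ => hM⟩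
  conv_lhs => rw [hparts]
  refine prod_biUnion fun N hN N' hN' hne => disjoint_filter.2 fun _ hM hMN hMN' => hne ?_
  obtain ⟨l, hl⟩ := P.nonempty_of_mem_parts hM
  exact Q.eq_of_mem_parts hN hN' (hMN hl) (hMN' hl)

lemma prod_parts_convexComb_le_of_le [CommRing R] [PartialOrder R] [IsOrderedRing R]
    (hPQ : P ≤ Q) {q r : R} (hq : 0 ≤ q) (hr : 0 ≤ r) (hqr : q + r = 1) {a b : α → R}
    (ha : ∀ l, 0 ≤ a l) (hb : ∀ l, 0 ≤ b l)
    (hab : ∀ N ∈ Q.parts, (∀ l ∈ N, b l ≤ a l) ∨ ∀ l ∈ N, a l ≤ b l) :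
    ∏ M ∈ P.parts, (q * ∏ l ∈ M, a l + r * ∏ l ∈ M, b l) ≤
      ∏ N ∈ Q.parts, (q * ∏ l ∈ N, a l + r * ∏ l ∈ N, b l) := by
  have prod_le {M N : Finset α} (hMN : M ⊆ N) {c d : α → R} (hc : ∀ l, 0 ≤ c l)
      (hcd : ∀ l ∈ N, c l ≤ d l) : ∏ l ∈ M, c l ≤ ∏ l ∈ M, d l :=
    prod_le_prod (fun l _ => hc l) fun l hl => hcd l (hMN hl)
  have ha' (M : Finset α) : 0 ≤ ∏ l ∈ M, a l := prod_nonneg fun l _ => ha l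
  have hb' (M : Finset α) : 0 ≤ ∏ l ∈ M, b l := prod_nonneg fun l _ => hb l
  rw [prod_parts_eq_prod_prod_filter hPQ]
  refine prod_le_prod (fun N _ => prod_nonneg fun M _ =>
    add_nonneg (mul_nonneg hq (ha' M)) (mul_nonneg hr (hb' M))) fun N hN => ?_
  rw [← prod_filter_parts_subset_prod hPQ hN a, ← prod_filter_parts_subset_prod hPQ hN b]
  refine prod_convexComb_le _ hq hr hqr (fun M _ => ha' M) (fun M _ => hb' M) ?_
  exact (hab N hN).imp (fun h M hM => prod_le (mem_filter.1 hM).2 hb h)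
    fun h M hM => prod_le (mem_filter.1 hM).2 ha h

end Partition

section SingleVoter

variable {n : ℕ} {p : ℝ}

lemma blockWeight_nonneg (hp : 0 ≤ p ∧ p ≤ 1) (M S : Finset (Fin n)) :
    0 ≤ blockWeight p M S := by
  unfold blockWeight
  split_ifs <;> linarith [hp.1, hp.2]

lemma partMeasure_nonneg (P : Finpartition (univ : Finset (Fin n))) (hp : 0 ≤ p ∧ p ≤ 1)
    (S : Finset (Fin n)) : 0 ≤ partMeasure P p S :=
  prod_nonneg fun M _ => blockWeight_nonneg hp M S

lemma blockWeight_inter (p : ℝ) (M S : Finset (Fin n)) :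
    blockWeight p M (M ∩ S) = blockWeight p M S := by
  simp [blockWeight, subset_inter_iff]

lemma sum_powerset_blockWeight_mul {M : Finset (Fin n)} (hM : M.Nonempty) (p : ℝ)
    (g : Finset (Fin n) → ℝ) :
    ∑ A ∈ M.powerset, blockWeight p M A * g A = p * g M + (1 - p) * g ∅ := by
  rw [sum_eq_add M ∅ hM.ne_empty]
  · simp [blockWeight, hM.ne_empty]
  · intro A hA ⟨hAM, hA0⟩
    have hAM' : A ⊆ M := mem_powerset.1 hA
    have hMA : ¬M ⊆ A := fun h => hAM (hAM'.antisymm h)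
    simp [blockWeight, hMA, inter_eq_right.2 hAM', hA0]
  · simp
  · simp

lemma sum_partMeasure_mul_prod_ite (P : Finpartition (univ : Finset (Fin n))) (p : ℝ)
    (a b : Fin n → ℝ) :
    ∑ S, partMeasure P p S * ∏ l, (if l ∈ S then a l else b l) =
      ∏ M ∈ P.parts, (p * ∏ l ∈ M, a l + (1 - p) * ∏ l ∈ M, b l) := by
  calc ∑ S, partMeasure P p S * ∏ l, (if l ∈ S then a l else b l)
      = ∑ S ∈ univ.powerset, ∏ M ∈ P.parts,
          (blockWeight p M (M ∩ S) * ∏ l ∈ M, if l ∈ M ∩ S then a l else b l) := by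
        rw [powerset_univ]
        refine sum_congr rfl fun S _ => ?_
        rw [← prod_parts_prod P, partMeasure, ← prod_mul_distrib]
        refine prod_congr rfl fun M _ => ?_
        rw [blockWeight_inter]
        exact congrArg _ (prod_congr rfl fun l hl => by simp [hl])
    _ = ∏ M ∈ P.parts, ∑ A ∈ M.powerset,
          (blockWeight p M A * ∏ l ∈ M, if l ∈ A then a l else b l) :=
        sum_powerset_prod_inter_parts P fun M A =>
          blockWeight p M A * ∏ l ∈ M, if l ∈ A then a l else b l
    _ = _ := prod_congr rfl fun M hM => by
        rw [sum_powerset_blockWeight_mul (P.nonempty_of_mem_parts hM)]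
        simp +contextual

lemma sum_partMeasure_mul_prod_ite_mono {P Q : Finpartition (univ : Finset (Fin n))}
    (hPQ : P ≤ Q) (hp : 0 ≤ p ∧ p ≤ 1) {a b : Fin n → ℝ} (ha : ∀ l, 0 ≤ a l) (hb : ∀ l, 0 ≤ b l)
    (hab : ∀ N ∈ Q.parts, (∀ l ∈ N, b l ≤ a l) ∨ ∀ l ∈ N, a l ≤ b l) :
    ∑ S, partMeasure P p S * ∏ l, (if l ∈ S then a l else b l) ≤
      ∑ S, partMeasure Q p S * ∏ l, (if l ∈ S then a l else b l) := by
  simp only [sum_partMeasure_mul_prod_ite]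
  exact prod_parts_convexComb_le_of_le hPQ hp.1 (sub_nonneg.2 hp.2) (by ring) ha hb hab

end SingleVoter

section ProductWeights

variable {α R : Type*} [Fintype α] [CommSemiring R] {m : ℕ}

lemma sum_prod_mul_fin_succ (w : Fin (m + 1) → α → R) (G : (Fin (m + 1) → α) → R) :
    ∑ t, (∏ i, w i (t i)) * G t =
      ∑ x, w 0 x * ∑ t : Fin m → α, (∏ i, w i.succ (t i)) * G (Fin.cons x t) := by
  rw [← (Fin.consEquiv fun _ => α).sum_comp, Fintype.sum_prod_type]
  simp [Fin.consEquiv, Fin.prod_univ_succ, mul_sum, mul_assoc]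

lemma sum_prod_mul_le_of_forall_sum_update_le [PartialOrder R] [IsOrderedRing R]
    {μ ν : Fin m → α → R} (hμ : ∀ i x, 0 ≤ μ i x)
    (hν : ∀ i x, 0 ≤ ν i x) {G : (Fin m → α) → R}
    (hG : ∀ i t, ∑ x, μ i x * G (Function.update t i x) ≤
      ∑ x, ν i x * G (Function.update t i x)) :
    ∑ t, (∏ i, μ i (t i)) * G t ≤ ∑ t, (∏ i, ν i (t i)) * G t := by
  induction m with
  | zero => simp
  | succ m ih =>
    have tail_le (x : α) : ∑ t : Fin m → α, (∏ i, μ i.succ (t i)) * G (Fin.cons x t) ≤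
        ∑ t : Fin m → α, (∏ i, ν i.succ (t i)) * G (Fin.cons x t) :=
      ih (fun i => hμ i.succ) (fun i => hν i.succ) fun i t => by
        simpa only [Fin.cons_update] using hG i.succ (Fin.cons x t)
    have head_le (t : Fin m → α) :
        ∑ x, μ 0 x * G (Fin.cons x t) ≤ ∑ x, ν 0 x * G (Fin.cons x t) := by
      rcases isEmpty_or_nonempty α with _ | ⟨⟨x⟩⟩
      · simp
      · simpa only [Fin.update_cons_zero] using hG 0 (Fin.cons x t)
    rw [sum_prod_mul_fin_succ, sum_prod_mul_fin_succ]
    calc ∑ x, μ 0 x * ∑ t : Fin m → α, (∏ i, μ i.succ (t i)) * G (Fin.cons x t)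
        ≤ ∑ x, μ 0 x * ∑ t : Fin m → α, (∏ i, ν i.succ (t i)) * G (Fin.cons x t) :=
          sum_le_sum fun x _ => mul_le_mul_of_nonneg_left (tail_le x) (hμ 0 x)
      _ = ∑ t : Fin m → α, (∏ i, ν i.succ (t i)) * ∑ x, μ 0 x * G (Fin.cons x t) := by
          simp only [mul_sum, mul_left_comm]
          exact sum_comm
      _ ≤ ∑ t : Fin m → α, (∏ i, ν i.succ (t i)) * ∑ x, ν 0 x * G (Fin.cons x t) :=
          sum_le_sum fun t _ => mul_le_mul_of_nonneg_left (head_le t)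
            (prod_nonneg fun i _ => hν i.succ (t i))
      _ = ∑ x, ν 0 x * ∑ t : Fin m → α, (∏ i, ν i.succ (t i)) * G (Fin.cons x t) := by
          simp only [mul_sum, mul_left_comm]
          exact sum_comm

end ProductWeights

section Schedule

variable {m n : ℕ} {p : Fin m → ℝ} {F : Fin n → Finset (Fin m) → ℝ}
  {Sch Sch' : Fin m → Finpartition (univ : Finset (Fin n))}

lemma Lh_bijective :
    Function.Bijective fun (T : Finset (Fin m × Fin n)) (h : Fin m) => Lh h T := by
  refine ⟨fun T T' hT => ?_, fun t => ⟨univ.filter fun x => x.2 ∈ t x.1, ?_⟩⟩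
  · ext ⟨h, l⟩
    simpa [Lh] using Finset.ext_iff.1 (congrFun hT h) l
  · ext
    simp [Lh]

lemma Hl_bijective :
    Function.Bijective fun (T : Finset (Fin m × Fin n)) (l : Fin n) => Hl l T := by
  refine ⟨fun T T' hT => ?_, fun t => ⟨univ.filter fun x => x.1 ∈ t x.2, ?_⟩⟩
  · ext ⟨h, l⟩
    simpa [Hl] using Finset.ext_iff.1 (congrFun hT l) h
  · ext
    simp [Hl]

lemma schedExp_eq_sum_pi (Sch : Fin m → Finpartition (univ : Finset (Fin n)))
    (p : Fin m → ℝ) (F : Fin n → Finset (Fin m) → ℝ) :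
    schedExp Sch p F = ∑ t : Fin m → Finset (Fin n),
      (∏ h, partMeasure (Sch h) (p h) (t h)) * ∏ l, F l {h | l ∈ t h} := by
  rw [← Lh_bijective.sum_comp]
  simp [schedExp, schedMeasure, Lh, Hl, mul_comm]

lemma filter_mem_update (t : Fin m → Finset (Fin n)) (h : Fin m) (S : Finset (Fin n))
    (l : Fin n) :
    ({k | l ∈ Function.update t h S k} : Finset (Fin m)) =
      if l ∈ S then insert h (({k | l ∈ t k} : Finset (Fin m)).erase h)
      else ({k | l ∈ t k} : Finset (Fin m)).erase h := by
  ext k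
  obtain rfl | hk := eq_or_ne k h
  · by_cases hl : l ∈ S <;> simp [hl]
  · by_cases hl : l ∈ S <;> simp [hl, hk]

/-- Alignment at each voter `h` of the functions `F l` whose elections `l` share a block of `Sch h`;
only such elections are correlated through the turnout of `h`. -/
def AlignedOnBlocks (F : Fin n → Finset (Fin m) → ℝ)
    (Sch : Fin m → Finpartition (univ : Finset (Fin n))) : Prop :=
  ∀ h, ∀ M ∈ (Sch h).parts,
    (∀ l ∈ M, IncreasingAt (F l) h) ∨ ∀ l ∈ M, DecreasingAt (F l) h

lemma Aligned.alignedOnBlocks (hF : Aligned F)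
    (Sch : Fin m → Finpartition (univ : Finset (Fin n))) : AlignedOnBlocks F Sch :=
  fun h _ _ => (hF h).imp (fun H l _ => H l) fun H l _ => H l

theorem schedExp_le_schedExp_of_coarser (hp : ∀ h, 0 ≤ p h ∧ p h ≤ 1)
    (hFnonneg : ∀ l S, 0 ≤ F l S) (hF : AlignedOnBlocks F Sch') (hSch : Coarser Sch' Sch) :
    schedExp Sch p F ≤ schedExp Sch' p F := by
  rw [schedExp_eq_sum_pi, schedExp_eq_sum_pi]
  refine sum_prod_mul_le_of_forall_sum_update_le (fun h => partMeasure_nonneg _ (hp h))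
    (fun h => partMeasure_nonneg _ (hp h)) fun h t => ?_
  simp only [filter_mem_update, apply_ite (F _)]
  refine sum_partMeasure_mul_prod_ite_mono (hSch h) (hp h) (fun l => hFnonneg l _)
    (fun l => hFnonneg l _) fun N hN => ?_
  exact (hF h N hN).imp (fun H l hl => H l hl _) fun H l hl => H l hl _

lemma partMeasure_bot (p : ℝ) (S : Finset (Fin n)) :
    partMeasure ⊥ p S = ∏ l, if l ∈ S then p else 1 - p := by
  rw [partMeasure, Finpartition.parts_bot, prod_map]
  refine prod_congr rfl fun l _ => ?_
  by_cases hl : l ∈ S <;> simp [blockWeight, hl]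

lemma bern_eq_prod_ite (p : Fin m → ℝ) (S : Finset (Fin m)) :
    bern p S = ∏ h, if h ∈ S then p h else 1 - p h := by
  simp [bern, prod_ite, filter_not, compl_eq_univ_sdiff]

lemma schedMeasure_bot (p : Fin m → ℝ) (T : Finset (Fin m × Fin n)) :
    schedMeasure (fun _ => ⊥) p T = ∏ l, bern p (Hl l T) := by
  simp only [schedMeasure, partMeasure_bot, bern_eq_prod_ite]
  rw [prod_comm]
  simp [Lh, Hl]

lemma schedExp_bot (p : Fin m → ℝ) (F : Fin n → Finset (Fin m) → ℝ) :
    schedExp (fun _ => ⊥) p F = ∏ l, bernExp p (F l) := by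
  simp only [schedExp, schedMeasure_bot, ← prod_mul_distrib, bernExp, Fintype.prod_sum]
  exact Hl_bijective.sum_comp fun u => ∏ l, F l (u l) * bern p (u l)

theorem schedExp_ge_prod_bernExp_general (hp : ∀ h, 0 ≤ p h ∧ p h ≤ 1)
    (hFnonneg : ∀ l S, 0 ≤ F l S) (hF : AlignedOnBlocks F Sch) :
    ∏ l, bernExp p (F l) ≤ schedExp Sch p F := by
  rw [← schedExp_bot]
  exact schedExp_le_schedExp_of_coarser hp hFnonneg hF fun h _ hM => bot_le (a := Sch h) hM

end Schedule

/-- Every staggered polling schedule yields an expectation at least as large as the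
fully separate schedule, whose value is the product of the individual expectations. -/
theorem schedExp_ge_prod_bernExp {m n : ℕ}
    (p : Fin m → ℝ) (hp : ∀ h, 0 ≤ p h ∧ p h ≤ 1)
    (F : Fin n → Finset (Fin m) → ℝ)
    (hFnonneg : ∀ l S, 0 ≤ F l S) (hFaligned : Aligned F)
    (Sch : Fin m → Finpartition (univ : Finset (Fin n))) :
    ∏ l, bernExp p (F l) ≤ schedExp Sch p F :=
  schedExp_ge_prod_bernExp_general hp hFnonneg (hFaligned.alignedOnBlocks Sch)
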